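/- arXiv:1705.03300 — 2 statements merged into one kernel-verified Lean document; each statement's English description precedes it below -/
import Mathlib

section
/- Let (A,G,α) be a C*-dynamical system with G discrete and A unital, and let φ : G → Z(A) be a function into the centre of A. Define F_φ : G → CB(A) by F_φ(t)(a) = φ(t)a. Then φ is α-positive definite (i.e. for all n ∈ ℕ and s₁,...,s_n ∈ G the matrix (α_{s_i}(φ(s_i⁻¹s_j)))_{i,j} belongs to M_n(A)⁺) if and only if N(F_φ) is of positive type. -/
noncomputable section

open scoped ComplexOrder
open Matrix
open scoped ENNReal

/-- Positivity of a matrix over a (possibly non-unital) C*-algebra: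
`M` is positive iff it factors as `Nᴴ * N`. -/
def MatPos {R : Type*} [NonUnitalSemiring R] [StarRing R] {ν : Type*} [Fintype ν]
    (M : Matrix ν ν R) : Prop :=
  ∃ N : Matrix ν ν R, M = Nᴴ * N

/-- A linear map between C*-algebras is completely positive if all its matrix
amplifications preserve positivity. -/
def IsCompletelyPositive {R S : Type*} [NonUnitalSemiring R] [StarRing R] [Module ℂ R]
    [NonUnitalSemiring S] [StarRing S] [Module ℂ S] (Φ : R →ₗ[ℂ] S) : Prop :=
  ∀ (n : ℕ) (M : Matrix (Fin n) (Fin n) R), MatPos M → MatPos (M.map Φ)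

variable {H : Type*} [NormedAddCommGroup H] [InnerProductSpace ℂ H] [CompleteSpace H]

/-- The bounded operator on the Hilbert space `H ⊕₂ ⋯ ⊕₂ H` associated to an
operator-valued `n × n` matrix. -/
def matOp {ν : Type*} [Fintype ν] (M : Matrix ν ν (H →L[ℂ] H)) :
    PiLp 2 (fun _ : ν => H) →L[ℂ] PiLp 2 (fun _ : ν => H) :=
  ((PiLp.continuousLinearEquiv 2 ℂ (fun _ : ν => H)).symm :
      (∀ _ : ν, H) →L[ℂ] PiLp 2 (fun _ : ν => H)) ∘L
    (ContinuousLinearMap.pi fun i =>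
      (∑ j, (M i j) ∘L (ContinuousLinearMap.proj j)) ∘L
        ((PiLp.continuousLinearEquiv 2 ℂ (fun _ : ν => H)) :
          PiLp 2 (fun _ : ν => H) →L[ℂ] ∀ _ : ν, H))

variable {H : Type*} [NormedAddCommGroup H] [InnerProductSpace ℂ H] [CompleteSpace H]
variable {X : Type*}

/-- Evaluation at a point, as a continuous linear map `ℓ²(X,H) → H`. -/
def lpEval (x : X) : lp (fun _ : X => H) 2 →L[ℂ] H :=
  LinearMap.mkContinuous
    { toFun := fun f => f x
      map_add' := fun f g => by
        have := lp.coeFn_add f g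
        exact congrFun this x
      map_smul' := fun c f => by
        have := lp.coeFn_smul c f
        exact congrFun this x }
    1 (fun f => by
      simpa using lp.norm_apply_le_norm (by norm_num) f x)

/-- Inclusion of the `x`-th coordinate, as a continuous linear map `H → ℓ²(X,H)`. -/
def lpSingle (x : X) : H →L[ℂ] lp (fun _ : X => H) 2 := by
  classical
  exact LinearMap.mkContinuous
    { toFun := fun ξ => lp.single 2 x ξ
      map_add' := fun ξ η => by
        apply lp.ext
        funext j
        by_cases h : j = x
        · subst h; simp [lp.single_apply_self]
        · simp [lp.single_apply_ne _ _ _ h, lp.coeFn_add]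
      map_smul' := fun c ξ => by simp [lp.single_smul] }
    1 (fun ξ => by
      simpa using (lp.norm_single (p := 2) (by norm_num)
        (fun _ : X => ξ) x).le)

/-- The elementary operator `e_{x,y} ⊗ T` on `ℓ²(X,H)`. -/
def elemOp (x y : X) (T : H →L[ℂ] H) :
    lp (fun _ : X => H) 2 →L[ℂ] lp (fun _ : X => H) 2 :=
  (lpSingle x) ∘L T ∘L (lpEval y)

/-- The operator `T_k` on `ℓ²(X,H)` associated with a finitely supported kernel
`k : X × X → B(H)`; it is (defined to be) `0` if `k` is not finitely supported. -/
def TOp (k : X × X → (H →L[ℂ] H)) :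
    lp (fun _ : X => H) 2 →L[ℂ] lp (fun _ : X => H) 2 :=
  ∑ᶠ (p : X × X), elemOp p.1 p.2 (k p)

variable {G : Type*} [Group G]

/-- The left regular translation `λ_t` on `ℓ²(G,H)`. -/
def lam (t : G) : lp (fun _ : G => H) 2 →L[ℂ] lp (fun _ : G => H) 2 :=
  LinearMap.mkContinuous
    { toFun := fun f =>
        ⟨fun s => f (t⁻¹ * s), by
          apply memℓp_gen
          have hf : Summable fun s => ‖f s‖ ^ (2 : ℝ≥0∞).toReal :=
            (lp.memℓp f).summable (by norm_num)
          exact ((Equiv.mulLeft t⁻¹).summable_iff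
            (f := fun s => ‖f s‖ ^ (2 : ℝ≥0∞).toReal)).2 hf⟩
      map_add' := fun f g => by
        apply lp.ext; funext s
        exact congrFun (lp.coeFn_add f g) (t⁻¹ * s)
      map_smul' := fun c f => by
        apply lp.ext; funext s
        exact congrFun (lp.coeFn_smul c f) (t⁻¹ * s) }
    1 (fun f => by
      rw [one_mul]
      refine lp.norm_le_of_tsum_le (by norm_num) (norm_nonneg f) ?_
      have h1 : ∑' (s : G), ‖f (t⁻¹ * s)‖ ^ (2 : ℝ≥0∞).toReal
          = ∑' (s : G), ‖f s‖ ^ (2 : ℝ≥0∞).toReal :=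
        (Equiv.mulLeft t⁻¹).tsum_eq (fun s => ‖f s‖ ^ (2 : ℝ≥0∞).toReal)
      show ∑' (s : G), ‖f (t⁻¹ * s)‖ ^ (2 : ℝ≥0∞).toReal ≤ ‖f‖ ^ (2 : ℝ≥0∞).toReal
      rw [h1, ← lp.norm_rpow_eq_tsum (by norm_num) f])

/-- The diagonal ("block multiplication") operator on `ℓ²(X,H)` associated with a
uniformly bounded family of operators. -/
def diagOp (T : X → (H →L[ℂ] H)) (C : ℝ) (hC : ∀ x, ‖T x‖ ≤ C) :
    lp (fun _ : X => H) 2 →L[ℂ] lp (fun _ : X => H) 2 := by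
  have hC' : ∀ x, ‖T x‖ ≤ max C 0 := fun x => (hC x).trans (le_max_left _ _)
  have hr : (0:ℝ) < (2 : ℝ≥0∞).toReal := by norm_num
  have key : ∀ (f : lp (fun _ : X => H) 2) (x : X),
      ‖T x (f x)‖ ^ (2 : ℝ≥0∞).toReal
        ≤ (max C 0) ^ (2 : ℝ≥0∞).toReal * ‖f x‖ ^ (2 : ℝ≥0∞).toReal := by
    intro f x
    have h1 : ‖T x (f x)‖ ≤ max C 0 * ‖f x‖ :=
      ((T x).le_opNorm (f x)).trans
        (mul_le_mul_of_nonneg_right (hC' x) (norm_nonneg _))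
    calc ‖T x (f x)‖ ^ (2 : ℝ≥0∞).toReal
        ≤ (max C 0 * ‖f x‖) ^ (2 : ℝ≥0∞).toReal :=
          Real.rpow_le_rpow (norm_nonneg _) h1 hr.le
      _ = (max C 0) ^ (2 : ℝ≥0∞).toReal * ‖f x‖ ^ (2 : ℝ≥0∞).toReal :=
          Real.mul_rpow (le_max_right _ _) (norm_nonneg _)
  have mem : ∀ f : lp (fun _ : X => H) 2, Memℓp (fun x => T x (f x)) 2 := by
    intro f
    apply memℓp_gen
    exact Summable.of_nonneg_of_le
      (fun x => Real.rpow_nonneg (norm_nonneg _) _) (key f)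
      (((lp.memℓp f).summable hr).mul_left _)
  exact LinearMap.mkContinuous
    { toFun := fun f => ⟨fun x => T x (f x), mem f⟩
      map_add' := fun f g => by
        apply lp.ext; funext x
        have := congrFun (lp.coeFn_add f g) x
        show T x ((f + g) x) = _
        rw [this]
        exact map_add (T x) (f x) (g x)
      map_smul' := fun c f => by
        apply lp.ext; funext x
        have := congrFun (lp.coeFn_smul c f) x
        show T x ((c • f) x) = _
        rw [this]
        simp [lp.coeFn_smul] }
    (max C 0) (fun f => by
      refine lp.norm_le_of_tsum_le hr (by positivity) ?_
      show ∑' (x : X), ‖T x (f x)‖ ^ (2 : ℝ≥0∞).toReal ≤ _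
      calc ∑' (x : X), ‖T x (f x)‖ ^ (2 : ℝ≥0∞).toReal
          ≤ ∑' (x : X), (max C 0) ^ (2 : ℝ≥0∞).toReal * ‖f x‖ ^ (2 : ℝ≥0∞).toReal :=
            Summable.tsum_le_tsum (key f)
              (Summable.of_nonneg_of_le
                (fun x => Real.rpow_nonneg (norm_nonneg _) _) (key f)
                (((lp.memℓp f).summable hr).mul_left _))
              (((lp.memℓp f).summable hr).mul_left _)
        _ = (max C 0) ^ (2 : ℝ≥0∞).toReal * ∑' (x : X), ‖f x‖ ^ (2 : ℝ≥0∞).toReal :=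
            tsum_mul_left
        _ = (max C 0) ^ (2 : ℝ≥0∞).toReal * ‖f‖ ^ (2 : ℝ≥0∞).toReal := by
            rw [lp.norm_rpow_eq_tsum hr]
        _ = (max C 0 * ‖f‖) ^ (2 : ℝ≥0∞).toReal :=
            (Real.mul_rpow (by positivity) (norm_nonneg _)).symm)

section CB

variable {A' B' : Type*} [AddCommMonoid A'] [Module ℂ A'] [AddCommMonoid B'] [Module ℂ B']
variable {K : Type*} [NormedAddCommGroup K] [InnerProductSpace ℂ K] [CompleteSpace K]

/-- All matrix amplifications of `Φ` are bounded by `C`, where matrices over the abstract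
spaces are normed through the given embeddings into concrete operator algebras. -/
def CBBound (ιA : A' → (H →L[ℂ] H)) (ιB : B' → (K →L[ℂ] K))
    (Φ : A' →ₗ[ℂ] B') (C : ℝ) : Prop :=
  ∀ (n : ℕ) (M : Matrix (Fin n) (Fin n) A'),
    ‖matOp (M.map (fun a => ιB (Φ a)))‖ ≤ C * ‖matOp (M.map ιA)‖

/-- Complete boundedness of a linear map, relative to embeddings of its domain and
codomain into concrete operator algebras. -/
def IsCB (ιA : A' → (H →L[ℂ] H)) (ιB : B' → (K →L[ℂ] K)) (Φ : A' →ₗ[ℂ] B') : Prop :=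
  ∃ C : ℝ, 0 ≤ C ∧ CBBound ιA ιB Φ C

/-- The completely bounded norm of a linear map, relative to embeddings of its domain
and codomain into concrete operator algebras. -/
def cbNorm (ιA : A' → (H →L[ℂ] H)) (ιB : B' → (K →L[ℂ] K)) (Φ : A' →ₗ[ℂ] B') : ℝ :=
  sInf { C : ℝ | 0 ≤ C ∧ CBBound ιA ιB Φ C }

end CB

section Schur

variable {A : Type*} [NonUnitalCStarAlgebra A]

/-- A *-representation is non-degenerate if the span of the vectors in its range is dense. -/
def NondegenerateRep {K : Type*} [NormedAddCommGroup K] [InnerProductSpace ℂ K]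
    [CompleteSpace K] (ρ : A →⋆ₙₐ[ℂ] (K →L[ℂ] K)) : Prop :=
  Dense (Submodule.span ℂ {ξ : K | ∃ (a : A) (v : K), ρ a v = ξ} : Set K)

/-- A function `φ : X × X → CB(A, B(H))` is of positive type if it maps positive
matrices to positive matrices, entrywise. -/
def PositiveType (φ : X → X → (A →ₗ[ℂ] (H →L[ℂ] H))) : Prop :=
  ∀ (m : ℕ) (x : Fin m → X) (a : Matrix (Fin m) (Fin m) A),
    MatPos a → MatPos (Matrix.of fun p q => φ (x p) (x q) (a p q))

/-- A kernel `k : X × X → A` is positive definite if all the matrices obtained by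
sampling it at finitely many points are positive. -/
def PosDefKernel (k : X × X → A) : Prop :=
  ∀ (n : ℕ) (x : Fin n → X), MatPos (Matrix.of fun i j => k (x i, x j))

/-- The operator `T_k` on `ℓ²(X,H)` of a kernel `k : X × X → A`, via the embedding
`ι : A → B(H)` (it is `0` unless `k` is finitely supported). -/
def TKer (ι : A →⋆ₙₐ[ℂ] (H →L[ℂ] H)) (k : X × X → A) :
    lp (fun _ : X => H) 2 →L[ℂ] lp (fun _ : X => H) 2 :=
  TOp (fun p => ι (k p))

/-- `C` is a complete bound for the Schur multiplication map `S_φ : T_k ↦ T_{φ·k}`,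
tested on (matrices of) finitely supported kernels, which span a dense subspace of
`K(ℓ²(X)) ⊗ A`. -/
def SchurBound (ι : A →⋆ₙₐ[ℂ] (H →L[ℂ] H)) (φ : X → X → (A →ₗ[ℂ] (H →L[ℂ] H)))
    (C : ℝ) : Prop :=
  ∀ (n : ℕ) (k : Fin n → Fin n → (X × X → A)),
    (∀ i j, (Function.support (k i j)).Finite) →
    ‖matOp (Matrix.of fun i j => TOp (fun p => φ p.1 p.2 (k i j p)))‖
      ≤ C * ‖matOp (Matrix.of fun i j => TKer ι (k i j))‖

/-- `φ` is a Schur `A`-multiplier: the map `S_φ : T_k ↦ T_{φ·k}` is completely bounded. -/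
def IsSchurMultiplier (ι : A →⋆ₙₐ[ℂ] (H →L[ℂ] H))
    (φ : X → X → (A →ₗ[ℂ] (H →L[ℂ] H))) : Prop :=
  ∃ C : ℝ, 0 ≤ C ∧ SchurBound ι φ C

/-- The multiplier norm `‖φ‖_m = ‖S_φ‖_cb` of a Schur `A`-multiplier. -/
def schurNorm (ι : A →⋆ₙₐ[ℂ] (H →L[ℂ] H))
    (φ : X → X → (A →ₗ[ℂ] (H →L[ℂ] H))) : ℝ :=
  sInf { C : ℝ | 0 ≤ C ∧ SchurBound ι φ C }

/-- Complete positivity of the map `S_φ : K(ℓ²(X)) ⊗ A → K(ℓ²(X)) ⊗ B(H)`, tested on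
(matrices of) finitely supported kernels. -/
def SchurCP (ι : A →⋆ₙₐ[ℂ] (H →L[ℂ] H)) (φ : X → X → (A →ₗ[ℂ] (H →L[ℂ] H))) : Prop :=
  ∀ (n : ℕ) (k : Fin n → Fin n → (X × X → A)),
    (∀ i j, (Function.support (k i j)).Finite) →
    MatPos (Matrix.of fun i j => TKer ι (k i j)) →
    MatPos (Matrix.of fun i j => TOp (fun p => φ p.1 p.2 (k i j p)))

end Schur

section Dynamics

variable {A : Type*} [NonUnitalCStarAlgebra A]

/-- `α` is an action of the group `G` on `A` by *-automorphisms. -/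
def IsAction (α : G → A ≃⋆ₐ[ℂ] A) : Prop :=
  (∀ a, α 1 a = a) ∧ ∀ s t : G, ∀ a : A, α (s * t) a = α s (α t a)

/-- A *-automorphism of `A`, as a `ℂ`-linear map. -/
def autLin (e : A ≃⋆ₐ[ℂ] A) : A →ₗ[ℂ] A :=
  { toFun := e
    map_add' := fun a b => map_add e a b
    map_smul' := fun c a => map_smul e c a }

/-- The representation `π` of `A` on `ℓ²(G,H)`: `(π(a)ξ)(s) = α_{s⁻¹}(a)(ξ(s))`. -/
def piRep (ι : A →⋆ₙₐ[ℂ] (H →L[ℂ] H)) (α : G → A ≃⋆ₐ[ℂ] A) (a : A) :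
    lp (fun _ : G => H) 2 →L[ℂ] lp (fun _ : G => H) 2 :=
  diagOp (fun s => ι (α s⁻¹ a)) ‖a‖ (fun s =>
    (NonUnitalStarAlgHom.norm_apply_le ι (α s⁻¹ a)).trans_eq
      (StarAlgEquiv.norm_map (α s⁻¹) a))

/-- The reduced crossed product `A ⋊_{α,r} G`, realised concretely on `ℓ²(G,H)` as the
norm closure of the linear span of the operators `π(a)λ_t`. -/
def CrossedSet (ι : A →⋆ₙₐ[ℂ] (H →L[ℂ] H)) (α : G → A ≃⋆ₐ[ℂ] A) :
    Set (lp (fun _ : G => H) 2 →L[ℂ] lp (fun _ : G => H) 2) :=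
  closure (Submodule.span ℂ
    {x | ∃ (a : A) (t : G), x = piRep ι α a * lam t} : Set _)

/-- `E` is the canonical conditional expectation of the reduced crossed product onto `A`:
it is characterised by `ι (E x) = (x)_{e,e}`, the `(e,e)` matrix entry of `x`. -/
def IsCondExp (ι : A →⋆ₙₐ[ℂ] (H →L[ℂ] H)) (α : G → A ≃⋆ₐ[ℂ] A)
    (E : (lp (fun _ : G => H) 2 →L[ℂ] lp (fun _ : G => H) 2) →ₗ[ℂ] A) : Prop :=
  ∀ x ∈ CrossedSet ι α, ι (E x) = (lpEval (1 : G)) ∘L x ∘L (lpSingle (1 : G))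

/-- The defining property of the map `S_F` associated with `F : G → CB(A)`:
`S_F(π(a)λ_s) = π(F(s)(a))λ_s`. -/
def HSGenProp (ι : A →⋆ₙₐ[ℂ] (H →L[ℂ] H)) (α : G → A ≃⋆ₐ[ℂ] A)
    (F : G → (A →ₗ[ℂ] A))
    (Φ : (lp (fun _ : G => H) 2 →L[ℂ] lp (fun _ : G => H) 2) →ₗ[ℂ]
         (lp (fun _ : G => H) 2 →L[ℂ] lp (fun _ : G => H) 2)) : Prop :=
  ∀ (a : A) (s : G), Φ (piRep ι α a * lam s) = piRep ι α (F s a) * lam s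

/-- `Φ` maps the reduced crossed product into itself and, on matrices over the reduced
crossed product, all amplifications of `Φ` are bounded by `C`. -/
def CBBoundOnCrossed (ι : A →⋆ₙₐ[ℂ] (H →L[ℂ] H)) (α : G → A ≃⋆ₐ[ℂ] A)
    (Φ : (lp (fun _ : G => H) 2 →L[ℂ] lp (fun _ : G => H) 2) →ₗ[ℂ]
         (lp (fun _ : G => H) 2 →L[ℂ] lp (fun _ : G => H) 2)) (C : ℝ) : Prop :=
  ∀ (n : ℕ) (M : Matrix (Fin n) (Fin n)
      (lp (fun _ : G => H) 2 →L[ℂ] lp (fun _ : G => H) 2)),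
    (∀ i j, M i j ∈ CrossedSet ι α) →
      ‖matOp (M.map Φ)‖ ≤ C * ‖matOp M‖

/-- `Φ` is completely positive on the reduced crossed product: matrices over the crossed
product which are positive are mapped to positive matrices. -/
def CPOnCrossed (ι : A →⋆ₙₐ[ℂ] (H →L[ℂ] H)) (α : G → A ≃⋆ₐ[ℂ] A)
    (Φ : (lp (fun _ : G => H) 2 →L[ℂ] lp (fun _ : G => H) 2) →ₗ[ℂ]
         (lp (fun _ : G => H) 2 →L[ℂ] lp (fun _ : G => H) 2)) : Prop :=
  (∀ x ∈ CrossedSet ι α, Φ x ∈ CrossedSet ι α) ∧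
  ∀ (n : ℕ) (M : Matrix (Fin n) (Fin n)
      (lp (fun _ : G => H) 2 →L[ℂ] lp (fun _ : G => H) 2)),
    (∀ i j, M i j ∈ CrossedSet ι α) → MatPos M → MatPos (M.map Φ)

/-- `F : G → CB(A)` is a Herz-Schur `(A,G,α)`-multiplier: the map `S_F` determined by
`S_F(π(a)λ_s) = π(F(s)(a))λ_s` extends to a completely bounded map on `A ⋊_{α,r} G`. -/
def IsHerzSchurMultiplier (ι : A →⋆ₙₐ[ℂ] (H →L[ℂ] H)) (α : G → A ≃⋆ₐ[ℂ] A)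
    (F : G → (A →ₗ[ℂ] A)) : Prop :=
  ∃ Φ, HSGenProp ι α F Φ ∧ (∀ x ∈ CrossedSet ι α, Φ x ∈ CrossedSet ι α) ∧
    ∃ C : ℝ, 0 ≤ C ∧ CBBoundOnCrossed ι α Φ C

/-- `F : G → CB(A)` is a completely positive Herz-Schur `(A,G,α)`-multiplier: the map
`S_F` extends to a completely positive (hence completely bounded) map on `A ⋊_{α,r} G`. -/
def IsHerzSchurMultiplierCP (ι : A →⋆ₙₐ[ℂ] (H →L[ℂ] H)) (α : G → A ≃⋆ₐ[ℂ] A)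
    (F : G → (A →ₗ[ℂ] A)) : Prop :=
  ∃ Φ, HSGenProp ι α F Φ ∧ CPOnCrossed ι α Φ ∧
    ∃ C : ℝ, 0 ≤ C ∧ CBBoundOnCrossed ι α Φ C

/-- The function `N(F) : G × G → CB(A)`, `N(F)(s,t)(a) = α_{s⁻¹}(F(st⁻¹)(α_s(a)))`. -/
def NF (α : G → A ≃⋆ₐ[ℂ] A) (F : G → (A →ₗ[ℂ] A)) : G → G → (A →ₗ[ℂ] A) :=
  fun s t => (autLin (α s⁻¹)) ∘ₗ (F (s * t⁻¹)) ∘ₗ (autLin (α s))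

end Dynamics

section Trace

variable {A : Type*} [NonUnitalCStarAlgebra A]

/-- `τ` is a positive linear functional. -/
def IsPositiveFunctional (τ : A →ₗ[ℂ] ℂ) : Prop :=
  ∀ a : A, 0 ≤ τ (star a * a)

/-- `τ` is tracial. -/
def IsTracial (τ : A →ₗ[ℂ] ℂ) : Prop :=
  ∀ a b : A, τ (a * b) = τ (b * a)

/-- `τ` is faithful. -/
def IsFaithfulFunctional (τ : A →ₗ[ℂ] ℂ) : Prop :=
  ∀ a : A, τ (star a * a) = 0 → a = 0

/-- The `L²`-norm `‖a‖_{2,τ} = τ(a*a)^{1/2}` associated with a positive functional `τ`. -/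
def l2norm (τ : A →ₗ[ℂ] ℂ) (a : A) : ℝ :=
  Real.sqrt (τ (star a * a)).re

/-- A map `Φ : A → A` is `L²`-bounded by `C` with respect to `τ`. -/
def L2BoundedBy (τ : A →ₗ[ℂ] ℂ) (Φ : A →ₗ[ℂ] A) (C : ℝ) : Prop :=
  ∀ a : A, l2norm τ (Φ a) ≤ C * l2norm τ a

/-- A map `Φ : A → A` is `L²`-bounded with respect to `τ`, i.e. it extends to a bounded
operator `T_Φ` on `L²(A,τ)`. -/
def L2Bounded (τ : A →ₗ[ℂ] ℂ) (Φ : A →ₗ[ℂ] A) : Prop :=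
  ∃ C : ℝ, 0 ≤ C ∧ L2BoundedBy τ Φ C

/-- The norm of the extension `T_Φ` of `Φ` to `L²(A,τ)`. -/
def l2OpNorm (τ : A →ₗ[ℂ] ℂ) (Φ : A →ₗ[ℂ] A) : ℝ :=
  sInf { C : ℝ | 0 ≤ C ∧ L2BoundedBy τ Φ C }

/-- `Φ` is `L²`-compact with respect to `τ`: the image under `Φ` of the `L²`-unit ball of
`A` is totally bounded in the `L²`-norm; equivalently, the extension `T_Φ` of `Φ` to
`L²(A,τ)` is a compact operator. -/
def L2Compact (τ : A →ₗ[ℂ] ℂ) (Φ : A →ₗ[ℂ] A) : Prop :=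
  ∀ ε : ℝ, 0 < ε → ∃ S : Finset A, ∀ a : A, l2norm τ a ≤ 1 →
    ∃ b ∈ S, l2norm τ (Φ a - b) < ε

end Trace

section Props

variable {A : Type*} [CStarAlgebra A]

/-- The pair `(A,τ)` has the C*-algebra Haagerup property (Definition 3.1, Dong). -/
def CStarHaagerup (τ : A →ₗ[ℂ] ℂ) : Prop :=
  ∃ (I : Type) (_ : Nonempty I) (_ : SemilatticeSup I) (Φ : I → (A →ₗ[ℂ] A)),
    (∀ i, Φ i 1 = 1) ∧
    (∀ i, IsCompletelyPositive (Φ i)) ∧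
    (∀ i (a : A), τ (Φ i (star a * a)) ≤ τ (star a * a)) ∧
    (∀ i, L2Compact τ (Φ i)) ∧
    (∀ a : A, Filter.Tendsto (fun i => l2norm τ (Φ i a - a)) Filter.atTop (nhds 0))

/-- `A` is a nuclear C*-algebra: there is a net of finite-rank completely positive
contractions converging to the identity in the point-norm topology. -/
def NuclearCStarAlgebra (A : Type*) [NonUnitalCStarAlgebra A] : Prop :=
  ∃ (I : Type) (_ : Nonempty I) (_ : SemilatticeSup I) (Φ : I → (A →ₗ[ℂ] A)),
    (∀ i, IsCompletelyPositive (Φ i)) ∧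
    (∀ i (a : A), ‖Φ i a‖ ≤ ‖a‖) ∧
    (∀ i, FiniteDimensional ℂ (LinearMap.range (Φ i))) ∧
    (∀ a : A, Filter.Tendsto (fun i => ‖Φ i a - a‖) Filter.atTop (nhds 0))

/-- A discrete group `G` has the Haagerup property: there is a net of normalised
positive-definite functions on `G`, vanishing at infinity, converging pointwise to `1`. -/
def GroupHaagerup (G : Type*) [Group G] : Prop :=
  ∃ (I : Type) (_ : Nonempty I) (_ : SemilatticeSup I) (φ : I → G → ℂ),
    (∀ i, φ i 1 = 1) ∧
    (∀ i (n : ℕ) (s : Fin n → G) (μ : Fin n → ℂ),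
      0 ≤ ∑ k, ∑ l, (starRingEnd ℂ) (μ k) * φ i ((s k)⁻¹ * s l) * μ l) ∧
    (∀ i, ∀ ε : ℝ, 0 < ε → ∃ S : Finset G, ∀ s ∉ S, ‖φ i s‖ ≤ ε) ∧
    (∀ s : G, Filter.Tendsto (fun i => φ i s) Filter.atTop (nhds 1))

end Props

section More

variable {A : Type*} [NonUnitalCStarAlgebra A]

/-- A star homomorphism, as a `ℂ`-linear map. -/
def iotaLin {B : Type*} [NonUnitalCStarAlgebra B] (ι : A →⋆ₙₐ[ℂ] B) : A →ₗ[ℂ] B :=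
  { toFun := ι
    map_add' := fun a b => map_add ι a b
    map_smul' := fun c a => map_smul ι c a }

/-- A function `φ : X × X → CB(A)` with values in the maps on `A` is of positive type. -/
def PositiveTypeA (φ : X → X → (A →ₗ[ℂ] A)) : Prop :=
  ∀ (m : ℕ) (x : Fin m → X) (a : Matrix (Fin m) (Fin m) A),
    MatPos a → MatPos (Matrix.of fun p q => φ (x p) (x q) (a p q))

/-- The representation `π` of `A` on `ℓ²(G,H)`, as a linear map. -/
def piRepLin (ι : A →⋆ₙₐ[ℂ] (H →L[ℂ] H)) (α : G → A ≃⋆ₐ[ℂ] A) :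
    A →ₗ[ℂ] (lp (fun _ : G => H) 2 →L[ℂ] lp (fun _ : G => H) 2) :=
  { toFun := piRep ι α
    map_add' := fun a b => by
      apply ContinuousLinearMap.ext; intro f
      apply lp.ext; funext s
      have h1 : (((piRep ι α a + piRep ι α b) f :
          lp (fun _ : G => H) 2) : ∀ _ : G, H) s
          = ((piRep ι α a f : ∀ _ : G, H) s) + ((piRep ι α b f : ∀ _ : G, H) s) := by
        rw [ContinuousLinearMap.add_apply]
        exact congrFun (lp.coeFn_add (piRep ι α a f) (piRep ι α b f)) s
      show ι (α s⁻¹ (a + b)) (f s) = _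
      rw [h1]
      show _ = ι (α s⁻¹ a) (f s) + ι (α s⁻¹ b) (f s)
      rw [map_add (α s⁻¹), map_add ι, ContinuousLinearMap.add_apply]
    map_smul' := fun c a => by
      apply ContinuousLinearMap.ext; intro f
      apply lp.ext; funext s
      have h1 : (((c • piRep ι α a) f :
          lp (fun _ : G => H) 2) : ∀ _ : G, H) s
          = c • ((piRep ι α a f : ∀ _ : G, H) s) := by
        rw [ContinuousLinearMap.smul_apply]
        exact congrFun (lp.coeFn_smul c (piRep ι α a f)) s
      show ι (α s⁻¹ (c • a)) (f s) = _
      rw [RingHom.id_apply, h1]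
      show _ = c • ι (α s⁻¹ a) (f s)
      rw [map_smul (α s⁻¹), map_smul ι, ContinuousLinearMap.smul_apply] }

/-- The completely bounded norm of a map defined on the reduced crossed product. -/
def cbNormOnCrossed (ι : A →⋆ₙₐ[ℂ] (H →L[ℂ] H)) (α : G → A ≃⋆ₐ[ℂ] A)
    (Φ : (lp (fun _ : G => H) 2 →L[ℂ] lp (fun _ : G => H) 2) →ₗ[ℂ]
         (lp (fun _ : G => H) 2 →L[ℂ] lp (fun _ : G => H) 2)) : ℝ :=
  sInf { C : ℝ | 0 ≤ C ∧ CBBoundOnCrossed ι α Φ C }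

/-- The `L²`-norm `‖x‖_{2,τ'}` on the reduced crossed product induced by the trace
`τ' = τ ∘ E`. -/
def l2normCr (τ : A →ₗ[ℂ] ℂ)
    (E : (lp (fun _ : G => H) 2 →L[ℂ] lp (fun _ : G => H) 2) →ₗ[ℂ] A)
    (x : lp (fun _ : G => H) 2 →L[ℂ] lp (fun _ : G => H) 2) : ℝ :=
  Real.sqrt (τ (E (star x * x))).re

/-- The map `h_Φ : G → CB(A)` associated with a map `Φ` on the reduced crossed product:
`h_Φ(s)(a) = E(Φ(π(a)λ_s)λ_s*)`. -/
def hMap (ι : A →⋆ₙₐ[ℂ] (H →L[ℂ] H)) (α : G → A ≃⋆ₐ[ℂ] A)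
    (E : (lp (fun _ : G => H) 2 →L[ℂ] lp (fun _ : G => H) 2) →ₗ[ℂ] A)
    (Φ : (lp (fun _ : G => H) 2 →L[ℂ] lp (fun _ : G => H) 2) →ₗ[ℂ]
         (lp (fun _ : G => H) 2 →L[ℂ] lp (fun _ : G => H) 2))
    (s : G) : A →ₗ[ℂ] A :=
  E ∘ₗ (LinearMap.mulRight ℂ (star (lam s))) ∘ₗ Φ ∘ₗ
    (LinearMap.mulRight ℂ (lam (H := H) s)) ∘ₗ piRepLin ι α

end More

section BigProps

open Filter

variable {A : Type*} [CStarAlgebra A]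

/-- The Haagerup property for the `C*`-dynamical system `(A,G,α,τ)` (Definition 3.3). -/
def DynHaagerup (ι : A →⋆ₙₐ[ℂ] (H →L[ℂ] H)) (α : G → A ≃⋆ₐ[ℂ] A)
    (τ : A →ₗ[ℂ] ℂ) : Prop :=
  ∃ (I : Type) (_ : Nonempty I) (_ : SemilatticeSup I) (F : I → G → (A →ₗ[ℂ] A)),
    (∀ i, IsHerzSchurMultiplierCP ι α (F i)) ∧
    (∀ i, F i 1 1 = 1) ∧
    (∀ i (a : A), τ (F i 1 (star a * a)) ≤ τ (star a * a)) ∧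
    (∀ i (t : G), L2Compact τ (F i t)) ∧
    (∀ i, ∀ ε : ℝ, 0 < ε → ∃ S : Finset G, ∀ s ∉ S, l2OpNorm τ (F i s) ≤ ε) ∧
    (∀ (t : G) (a : A),
      Tendsto (fun i => l2norm τ (F i t a - a)) atTop (nhds 0))

/-- The C*-algebra Haagerup property for the reduced crossed product `A ⋊_{α,r} G`
endowed with the induced trace `τ' = τ ∘ E` (Definition 3.1). -/
def CrossedCStarHaagerup (ι : A →⋆ₙₐ[ℂ] (H →L[ℂ] H)) (α : G → A ≃⋆ₐ[ℂ] A)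
    (τ : A →ₗ[ℂ] ℂ)
    (E : (lp (fun _ : G => H) 2 →L[ℂ] lp (fun _ : G => H) 2) →ₗ[ℂ] A) : Prop :=
  ∃ (I : Type) (_ : Nonempty I) (_ : SemilatticeSup I)
    (Φ : I → ((lp (fun _ : G => H) 2 →L[ℂ] lp (fun _ : G => H) 2) →ₗ[ℂ]
              (lp (fun _ : G => H) 2 →L[ℂ] lp (fun _ : G => H) 2))),
    (∀ i, Φ i 1 = 1) ∧
    (∀ i, CPOnCrossed ι α (Φ i)) ∧
    (∀ i, ∀ x ∈ CrossedSet ι α, τ (E (Φ i (star x * x))) ≤ τ (E (star x * x))) ∧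
    (∀ i, ∀ ε : ℝ, 0 < ε →
      ∃ S : Finset (lp (fun _ : G => H) 2 →L[ℂ] lp (fun _ : G => H) 2),
        ∀ x ∈ CrossedSet ι α, l2normCr τ E x ≤ 1 →
          ∃ b ∈ S, l2normCr τ E (Φ i x - b) < ε) ∧
    (∀ x ∈ CrossedSet ι α,
      Tendsto (fun i => l2normCr τ E (Φ i x - x)) atTop (nhds 0))

end BigProps

section Nuc

open Filter

variable {A : Type*} [NonUnitalCStarAlgebra A]

/-- Nuclearity of the reduced crossed product `A ⋊_{α,r} G`: there is a net of
finite-rank completely positive contractions on it converging to the identity in the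
point-norm topology. -/
def CrossedNuclear (ι : A →⋆ₙₐ[ℂ] (H →L[ℂ] H)) (α : G → A ≃⋆ₐ[ℂ] A) : Prop :=
  ∃ (I : Type) (_ : Nonempty I) (_ : SemilatticeSup I)
    (Φ : I → ((lp (fun _ : G => H) 2 →L[ℂ] lp (fun _ : G => H) 2) →ₗ[ℂ]
              (lp (fun _ : G => H) 2 →L[ℂ] lp (fun _ : G => H) 2))),
    (∀ i, CPOnCrossed ι α (Φ i)) ∧
    (∀ i, ∀ x ∈ CrossedSet ι α, ‖Φ i x‖ ≤ ‖x‖) ∧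
    (∀ i, FiniteDimensional ℂ
      (Submodule.span ℂ ((fun x => Φ i x) '' CrossedSet ι α))) ∧
    (∀ x ∈ CrossedSet ι α, Tendsto (fun i => ‖Φ i x - x‖) atTop (nhds 0))

/-- Nuclearity of the `C*`-dynamical system `(A,G,α)` (Definition 4.2): a net of
completely positive, finitely supported Herz-Schur multipliers, with `‖F_i(e)‖_cb ≤ 1`,
with finite-rank values, converging to the identity pointwise in norm. -/
def DynNuclear (ι : A →⋆ₙₐ[ℂ] (H →L[ℂ] H)) (α : G → A ≃⋆ₐ[ℂ] A) : Prop :=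
  ∃ (I : Type) (_ : Nonempty I) (_ : SemilatticeSup I) (F : I → G → (A →ₗ[ℂ] A)),
    (∀ i, IsHerzSchurMultiplierCP ι α (F i)) ∧
    (∀ i, (Function.support (F i)).Finite) ∧
    (∀ i, CBBound (fun a => ι a) (fun a => ι a) (F i 1) 1) ∧
    (∀ i (s : G), FiniteDimensional ℂ (LinearMap.range (F i s))) ∧
    (∀ (s : G) (a : A), Tendsto (fun i => ‖F i s a - a‖) atTop (nhds 0))

end Nuc

section Amen

open Filter

variable {A : Type*} [CStarAlgebra A]

/-- Amenability of the action `α` of a discrete group `G` on a unital C*-algebra `A`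
(Definition 4.5): a net of finitely supported functions `T_i : G → Z(A)⁺` with
`Σ_s T_i(s)² = 1` and `‖Σ_s (T_i(s) - α_t(T_i(t⁻¹s)))*(T_i(s) - α_t(T_i(t⁻¹s)))‖ → 0`. -/
def AmenableAction {G : Type*} [Group G] (α : G → A ≃⋆ₐ[ℂ] A) : Prop :=
  ∃ (I : Type) (_ : Nonempty I) (_ : SemilatticeSup I) (T : I → G → A),
    (∀ i, (Function.support (T i)).Finite) ∧
    (∀ i (s : G) (c : A), Commute (T i s) c) ∧
    (∀ i (s : G), ∃ b : A, T i s = star b * b) ∧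
    (∀ i, ∑ᶠ s : G, T i s * T i s = 1) ∧
    (∀ t : G, Tendsto (fun i =>
        ‖∑ᶠ s : G, star (T i s - α t (T i (t⁻¹ * s))) *
          (T i s - α t (T i (t⁻¹ * s)))‖) atTop (nhds 0))

end Amen

universe u v w

/-- Data for a Stinespring-type representation of an operator-valued function on
`X × X`: a Hilbert space `K`, a *-representation `ρ : A → B(K)` and
families of operators `V, W : X → B(H,K)`. -/
structure OpValuedRep (A : Type u) [NonUnitalCStarAlgebra A]
    (H : Type v) [NormedAddCommGroup H] [InnerProductSpace ℂ H] [CompleteSpace H]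
    (X : Type w) where
  /-- the Hilbert space of the representation -/
  K : Type (max u v w)
  [nacg : NormedAddCommGroup K]
  [ips : InnerProductSpace ℂ K]
  [cpl : CompleteSpace K]
  /-- the representation -/
  ρ : A →⋆ₙₐ[ℂ] (K →L[ℂ] K)
  /-- the left family of operators -/
  V : X → (H →L[ℂ] K)
  /-- the right family of operators -/
  W : X → (H →L[ℂ] K)

attribute [instance] OpValuedRep.nacg OpValuedRep.ips OpValuedRep.cpl

end
noncomputable section
open scoped ComplexOrder ENNReal
open Matrix

/-!
Multiplication by a central kernel `k` is of positive type exactly when `k` is positive definite: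
evaluate at the all-ones matrix in one direction, and in the other use that the Schur product of a
positive central matrix `Z` with `P = Bᴴ * B` is `∑ l, (diagonal (B l))ᴴ * Z * diagonal (B l)`.
Since `N(F_φ)(s, t)` is multiplication by the central element `α_{s⁻¹}(φ(s t⁻¹))`, the theorem
follows by substituting `s ↦ s⁻¹` in the kernel `(s, t) ↦ α_s(φ(s⁻¹ t))`.
-/

section Matrices

variable {l m n R : Type*}

theorem mul_eq_sum_vecMulVec [NonUnitalNonAssocSemiring R] [Fintype l] (M : Matrix m l R)
    (N : Matrix l n R) : M * N = ∑ k, vecMulVec (Mᵀ k) (N k) := by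
  ext i j
  simp only [Matrix.mul_apply, Matrix.sum_apply, vecMulVec_apply, transpose_apply]

theorem hadamard_vecMulVec_of_mem_center [NonUnitalSemiring R] [Fintype m] [DecidableEq m]
    [Fintype n] [DecidableEq n] {Z : Matrix m n R} (hZ : ∀ i j, Z i j ∈ Set.center R)
    (u : m → R) (v : n → R) : Z ⊙ vecMulVec u v = diagonal u * Z * diagonal v := by
  ext i j
  rw [hadamard_apply, vecMulVec_apply, mul_diagonal, diagonal_mul, ← mul_assoc,
    (Set.mem_center_iff.1 (hZ i j)).comm]

end Matrices

section PositiveMatrices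

variable {ν R A : Type*} [Fintype ν] [NonUnitalSemiring R] [StarRing R]
  [NonUnitalCStarAlgebra A]

theorem matPos_vecMulVec_star_self (v : ν → R) : MatPos (vecMulVec (star v) v) := by
  classical
  rcases isEmpty_or_nonempty ν with _ | ⟨⟨i₀⟩⟩
  · exact ⟨0, Subsingleton.elim _ _⟩
  · refine ⟨(0 : Matrix ν ν R).updateRow i₀ v, ?_⟩
    ext i j
    simp [Matrix.mul_apply, Matrix.updateRow_apply, vecMulVec_apply]

theorem MatPos.conjTranspose_mul_mul_same {M : Matrix ν ν R} (hM : MatPos M)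
    (N : Matrix ν ν R) : MatPos (Nᴴ * M * N) := by
  obtain ⟨C, rfl⟩ := hM
  exact ⟨C * N, by simp only [conjTranspose_mul, Matrix.mul_assoc]⟩

theorem exists_star_mul_self_add_eq_star_mul_self (a b : A) :
    ∃ x : A, star a * a + star b * b = star x * x := by
  let _ : PartialOrder A := CStarAlgebra.spectralOrder A
  have : StarOrderedRing A := CStarAlgebra.spectralOrderedRing A
  exact CStarAlgebra.nonneg_iff_eq_star_mul_self.1
    (add_nonneg (star_mul_self_nonneg a) (star_mul_self_nonneg b))

theorem MatPos.add {M N : Matrix ν ν A} (hM : MatPos M) (hN : MatPos N) : MatPos (M + N) := by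
  -- The C⋆-algebra structure on `CStarMatrix ν ν A` is only available over an ordered `A`.
  let _ : PartialOrder A := CStarAlgebra.spectralOrder A
  have : StarOrderedRing A := CStarAlgebra.spectralOrderedRing A
  obtain ⟨B, rfl⟩ := hM
  obtain ⟨C, rfl⟩ := hN
  obtain ⟨x, hx⟩ := exists_star_mul_self_add_eq_star_mul_self
    (CStarMatrix.ofMatrix B) (CStarMatrix.ofMatrix C)
  exact ⟨CStarMatrix.ofMatrix.symm x, hx⟩

theorem MatPos.sum {ι : Type*} {s : Finset ι} {M : ι → Matrix ν ν A}
    (hM : ∀ i ∈ s, MatPos (M i)) : MatPos (∑ i ∈ s, M i) :=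
  Finset.sum_induction M MatPos (fun _ _ => MatPos.add) ⟨0, by simp⟩ hM

theorem MatPos.hadamard_of_mem_center {Z P : Matrix ν ν A} (hZ : MatPos Z)
    (hcentral : ∀ i j, Z i j ∈ Set.center A) (hP : MatPos P) : MatPos (Z ⊙ P) := by
  classical
  obtain ⟨B, rfl⟩ := hP
  have schur_eq : Z ⊙ (Bᴴ * B) = ∑ l, (diagonal (B l))ᴴ * Z * diagonal (B l) :=
    calc Z ⊙ (Bᴴ * B) = ∑ l, Z ⊙ vecMulVec (star (B l)) (B l) := by
          rw [mul_eq_sum_vecMulVec]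
          ext i j
          simp only [hadamard_apply, Matrix.sum_apply, Finset.mul_sum]
          rfl
      _ = ∑ l, (diagonal (B l))ᴴ * Z * diagonal (B l) := by
          simp only [hadamard_vecMulVec_of_mem_center hcentral, diagonal_conjTranspose]
  rw [schur_eq]
  exact MatPos.sum fun l _ => hZ.conjTranspose_mul_mul_same _

end PositiveMatrices

section Kernels

variable {X Y A : Type*}

theorem PosDefKernel.comp [NonUnitalCStarAlgebra A] {k : X × X → A}
    (hk : PosDefKernel k) (f : Y → X) : PosDefKernel fun p : Y × Y => k (f p.1, f p.2) :=
  fun n y => hk n (f ∘ y)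

theorem posDefKernel_comp_equiv [NonUnitalCStarAlgebra A] {k : X × X → A}
    (e : Y ≃ X) : PosDefKernel (fun p : Y × Y => k (e p.1, e p.2)) ↔ PosDefKernel k :=
  ⟨fun hk => by simpa using hk.comp e.symm, fun hk => hk.comp e⟩

theorem PosDefKernel.positiveTypeA_mulLeft [NonUnitalCStarAlgebra A]
    {k : X × X → A} (hk : PosDefKernel k) (hcentral : ∀ p, k p ∈ Set.center A) :
    PositiveTypeA fun x y => LinearMap.mulLeft ℂ (k (x, y)) :=
  fun m x _ ha => (hk m x).hadamard_of_mem_center (fun _ _ => hcentral _) ha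

theorem PositiveTypeA.posDefKernel_of_mulLeft [CStarAlgebra A] {k : X × X → A}
    (hk : PositiveTypeA fun x y => LinearMap.mulLeft ℂ (k (x, y))) :
    PosDefKernel k := by
  intro n x
  have ones_pos : MatPos (Matrix.of 1 : Matrix (Fin n) (Fin n) A) := by
    convert matPos_vecMulVec_star_self (1 : Fin n → A)
    ext i j
    simp [vecMulVec_apply]
  simpa using hk n x _ ones_pos

theorem positiveTypeA_mulLeft_iff_posDefKernel [CStarAlgebra A] {k : X × X → A}
    (hcentral : ∀ p, k p ∈ Set.center A) :
    PositiveTypeA (fun x y => LinearMap.mulLeft ℂ (k (x, y))) ↔ PosDefKernel k :=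
  ⟨PositiveTypeA.posDefKernel_of_mulLeft, fun hk => hk.positiveTypeA_mulLeft hcentral⟩

end Kernels

theorem NF_mulLeft {A : Type*} [NonUnitalCStarAlgebra A] {G : Type*} [Group G]
    {α : G → A ≃⋆ₐ[ℂ] A} (hα : IsAction α) (φ : G → A) :
    NF α (fun t => LinearMap.mulLeft ℂ (φ t)) =
      fun s t => LinearMap.mulLeft ℂ (α s⁻¹ (φ (s * t⁻¹))) := by
  ext s t a
  have inv_apply_apply : α s⁻¹ (α s a) = a := by rw [← hα.2, inv_mul_cancel, hα.1]
  calc α s⁻¹ (φ (s * t⁻¹) * α s a) = α s⁻¹ (φ (s * t⁻¹)) * α s⁻¹ (α s a) := map_mul _ _ _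
    _ = α s⁻¹ (φ (s * t⁻¹)) * a := by rw [inv_apply_apply]

/-- **α-positive definiteness.** Let `A` be unital and `φ : G → Z(A)` a function into
the centre of `A`; let `F_φ(t)` be multiplication by `φ(t)`.  Then `φ` is α-positive
definite if and only if `N(F_φ)` is of positive type. -/
theorem alphaPosDef_iff_NF_positiveType
    {A : Type*} [CStarAlgebra A] {G : Type*} [Group G]
    (α : G → A ≃⋆ₐ[ℂ] A) (hα : IsAction α)
    (φ : G → A) (hcentral : ∀ (t : G) (c : A), Commute (φ t) c) :
    (∀ (n : ℕ) (s : Fin n → G),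
      MatPos (Matrix.of fun i j : Fin n => α (s i) (φ ((s i)⁻¹ * s j)))) ↔
    PositiveTypeA (NF α (fun t => LinearMap.mulLeft ℂ (φ t))) := by
  have mem_center (p : G × G) : α p.1⁻¹ (φ (p.1 * p.2⁻¹)) ∈ Set.center A :=
    MulEquivClass.apply_mem_center _ (Semigroup.mem_center_iff.2 fun c => (hcentral _ c).eq.symm)
  calc (∀ (n : ℕ) (s : Fin n → G),
        MatPos (Matrix.of fun i j : Fin n => α (s i) (φ ((s i)⁻¹ * s j))))
      ↔ PosDefKernel (fun p : G × G => α p.1 (φ (p.1⁻¹ * p.2))) := Iff.rfl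
    _ ↔ PosDefKernel (fun p : G × G => α p.1⁻¹ (φ (p.1 * p.2⁻¹))) := by
        simpa using (posDefKernel_comp_equiv (Equiv.inv G)
          (k := fun p => α p.1 (φ (p.1⁻¹ * p.2)))).symm
    _ ↔ PositiveTypeA (fun s t => LinearMap.mulLeft ℂ (α s⁻¹ (φ (s * t⁻¹)))) :=
        (positiveTypeA_mulLeft_iff_posDefKernel mem_center).symm
    _ ↔ PositiveTypeA (NF α (fun t => LinearMap.mulLeft ℂ (φ t))) := by rw [NF_mulLeft hα]

end
end

section
/- Let (A,G,α) be a C*-dynamical system with G discrete, F a finite subset of G, and Φ ∈ CB(A). The map h_F : G → B(A) given by h_F(s)(a) = Σ_{p ∈ F ∩ sF} (α_p ∘ Φ ∘ α_p⁻¹)(a) is a Herz-Schur (A,G,α)-multiplier with ||S_{h_F}||_cb ≤ |F| · ||Φ||_cb. Moreover, if Φ is completely positive then h_F is a completely positive Herz-Schur (A,G,α)-multiplier. -/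
noncomputable section
open scoped ComplexOrder ENNReal
open Matrix

/-!
With `x_{p,q}` the matrix entries of `x` on `ℓ²(G, H)`, the multiplier is implemented by
`x ↦ ∑_{p, q ∈ F} λ_p π(Φ(x_{p,q})) λ_q*`: row `p` of the generator `π(a)λ_s` has the single entry
`α_{p⁻¹}(a)`, at `q = s⁻¹p`, and `λ_p π(b) λ_q* = π(α_p(b)) λ_{pq⁻¹}`. The map compresses `x` to
its `F × F` block, applies `Φ` and then `π` entrywise, and conjugates by the row `(λ_p)_{p ∈ F}`.
The compression is contractive and the row has norm at most `√|F|`, whence the factor `|F|`; both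
conjugations preserve positivity.
-/

open scoped InnerProduct lp

section OperatorMatrices

variable {K : Type*} [NormedAddCommGroup K] [InnerProductSpace ℂ K]
variable {ν μ : Type*} [Fintype ν] [Fintype μ]

lemma matOp_apply (M : Matrix ν ν (K →L[ℂ] K)) (ξ : PiLp 2 fun _ : ν => K) (i : ν) :
    matOp M ξ i = ∑ j, M i j (ξ j) := by
  simp [matOp]

lemma inner_matOp (M : Matrix ν ν (K →L[ℂ] K)) (ξ η : PiLp 2 fun _ : ν => K) :
    inner ℂ η (matOp M ξ) = ∑ i, ∑ j, inner ℂ (η i) (M i j (ξ j)) := by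
  simp only [PiLp.inner_apply, matOp_apply, inner_sum]

lemma matOp_mul (M N : Matrix ν ν (K →L[ℂ] K)) : matOp (M * N) = matOp M * matOp N := by
  ext ξ i
  simp only [mul_apply, matOp_apply, mul_apply_eq_comp, _root_.sum_apply, map_sum]
  exact Finset.sum_comm

lemma matOp_injective : Function.Injective (matOp : Matrix ν ν (K →L[ℂ] K) → _) := by
  classical
  intro M N h
  ext i j v
  have hij := congr($h (PiLp.single 2 j v) i)
  simpa [matOp_apply, Pi.single_apply, apply_ite] using hij

lemma norm_matOp_submatrix (e : ν ≃ μ) (M : Matrix μ μ (K →L[ℂ] K)) :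
    ‖matOp (M.submatrix e e)‖ = ‖matOp M‖ := by
  let U := LinearIsometryEquiv.piLpCongrLeft 2 ℂ K e
  have intertwine : U.toLinearIsometry.toContinuousLinearMap ∘L matOp (M.submatrix e e) =
      matOp M ∘L (U : (PiLp 2 fun _ : ν => K) →L[ℂ] PiLp 2 fun _ : μ => K) := by
    ext ξ i
    have sum_reindex : ∑ j, M (e (e.symm i)) (e j) (ξ j) = ∑ j, M i j (ξ (e.symm j)) :=
      Fintype.sum_equiv e _ _ fun j => by simp
    simpa [matOp_apply, U, LinearIsometryEquiv.piLpCongrLeft_apply, Equiv.piCongrLeft'] using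
      sum_reindex
  rw [← LinearIsometry.norm_toContinuousLinearMap_comp U.toLinearIsometry, intertwine]
  exact ContinuousLinearMap.opNorm_comp_linearIsometryEquiv _ U

variable [CompleteSpace K]

lemma matOp_conjTranspose (M : Matrix ν ν (K →L[ℂ] K)) : matOp Mᴴ = star (matOp M) := by
  rw [ContinuousLinearMap.star_eq_adjoint, ContinuousLinearMap.eq_adjoint_iff]
  intro ξ η
  rw [← inner_conj_symm, inner_matOp, inner_matOp]
  simp only [map_sum, inner_conj_symm, conjTranspose_apply, ContinuousLinearMap.star_eq_adjoint,
    ContinuousLinearMap.adjoint_inner_left]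
  exact Finset.sum_comm

variable {A : Type*} [NonUnitalCStarAlgebra A]

/-- The amplification `ρ_ν : M_ν(A) → B(K^ν)` of a representation `ρ` of `A` on `K`. -/
def matRep (ν : Type*) [Fintype ν] (ρ : A →⋆ₙₐ[ℂ] (K →L[ℂ] K)) :
    CStarMatrix ν ν A →⋆ₙₐ[ℂ] ((PiLp 2 fun _ : ν => K) →L[ℂ] PiLp 2 fun _ : ν => K) where
  toFun M := matOp ((CStarMatrix.ofMatrix.symm M).map ρ)
  map_smul' c M := by
    ext ξ i
    simp [matOp_apply, Finset.smul_sum]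
  map_zero' := by
    ext ξ i
    simp [matOp_apply]
  map_add' M N := by
    ext ξ i
    simp [matOp_apply, Finset.sum_add_distrib]
  map_mul' M N := by
    rw [← matOp_mul, ← Matrix.map_mul]
    rfl
  map_star' M := by
    rw [← matOp_conjTranspose, ← conjTranspose_map ρ (map_star ρ)]
    rfl

lemma matRep_injective {ρ : A →⋆ₙₐ[ℂ] (K →L[ℂ] K)} (hρ : Function.Injective ρ) :
    Function.Injective (matRep ν ρ) :=
  matOp_injective.comp (Matrix.map_injective hρ)

lemma norm_matOp_map_le_of_injective {L : Type*} [NormedAddCommGroup L] [InnerProductSpace ℂ L]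
    [CompleteSpace L] {ρ : A →⋆ₙₐ[ℂ] (K →L[ℂ] K)} (hρ : Function.Injective ρ)
    (σ : A →⋆ₙₐ[ℂ] (L →L[ℂ] L)) (M : Matrix ν ν A) :
    ‖matOp (M.map σ)‖ ≤ ‖matOp (M.map ρ)‖ := by
  let _ := CStarAlgebra.spectralOrder A
  have := CStarAlgebra.spectralOrderedRing A
  calc ‖matOp (M.map σ)‖ ≤ ‖CStarMatrix.ofMatrix M‖ :=
        NonUnitalStarAlgHom.norm_apply_le (matRep ν σ) _
    _ = ‖matOp (M.map ρ)‖ :=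
        (NonUnitalStarAlgHom.norm_map (matRep ν ρ) (matRep_injective hρ) _).symm

end OperatorMatrices

section Positivity

lemma exists_eq_star_mul_self_of_map_nonneg {B C : Type*} [NonUnitalCStarAlgebra B]
    [NonUnitalCStarAlgebra C] [PartialOrder C] [StarOrderedRing C] {φ : B →⋆ₙₐ[ℂ] C}
    (hφ : Function.Injective φ) {b : B} (hb : 0 ≤ φ b) : ∃ c, b = star c * c := by
  let _ := CStarAlgebra.spectralOrder B
  have := CStarAlgebra.spectralOrderedRing B
  obtain ⟨hφb, negPart_eq_zero⟩ :=
    CStarAlgebra.nonneg_iff_isSelfAdjoint_and_negPart_eq_zero.1 hb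
  have b_selfAdjoint : IsSelfAdjoint b := hφ (by rw [map_star, hφb.star_eq])
  have map_negPart : φ b⁻ = (φ b)⁻ :=
    NonUnitalStarAlgHomClass.map_cfcₙ φ (fun x : ℝ => x⁻) b (by fun_prop) (by simp)
      (NonUnitalStarAlgHom.isometry φ hφ).continuous b_selfAdjoint hφb
  rw [← CStarAlgebra.nonneg_iff_eq_star_mul_self,
    CStarAlgebra.nonneg_iff_isSelfAdjoint_and_negPart_eq_zero]
  refine ⟨b_selfAdjoint, hφ ?_⟩
  rw [map_negPart, negPart_eq_zero, map_zero]

variable {ν μ : Type*} [Fintype ν] [Fintype μ]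

section Reindex

variable {R S : Type*} [NonUnitalSemiring R] [StarRing R] [NonUnitalSemiring S] [StarRing S]

lemma MatPos.submatrix_equiv {M : Matrix μ μ R} (hM : MatPos M) (e : ν ≃ μ) :
    MatPos (M.submatrix e e) := by
  obtain ⟨N, rfl⟩ := hM
  exact ⟨N.submatrix e e, by rw [conjTranspose_submatrix, submatrix_mul_equiv]⟩

lemma IsCompletelyPositive.matPos_map [Module ℂ R] [Module ℂ S] {Φ : R →ₗ[ℂ] S}
    (hΦ : IsCompletelyPositive Φ) {M : Matrix ν ν R} (hM : MatPos M) : MatPos (M.map Φ) := by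
  let e := Fintype.equivFin ν
  simpa [submatrix_map] using (hΦ _ _ (hM.submatrix_equiv e.symm)).submatrix_equiv e

end Reindex

variable {K : Type*} [NormedAddCommGroup K] [InnerProductSpace ℂ K] [CompleteSpace K]
variable {A : Type*} [NonUnitalCStarAlgebra A]

lemma MatPos.matOp_map_nonneg {M : Matrix ν ν A} (hM : MatPos M)
    (ρ : A →⋆ₙₐ[ℂ] (K →L[ℂ] K)) : 0 ≤ matOp (M.map ρ) := by
  obtain ⟨N, rfl⟩ := hM
  rw [Matrix.map_mul, conjTranspose_map ρ (map_star ρ), matOp_mul, matOp_conjTranspose]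
  exact star_mul_self_nonneg _

lemma matPos_of_matOp_map_nonneg {ρ : A →⋆ₙₐ[ℂ] (K →L[ℂ] K)} (hρ : Function.Injective ρ)
    {M : Matrix ν ν A} (hM : 0 ≤ matOp (M.map ρ)) : MatPos M := by
  let _ := CStarAlgebra.spectralOrder A
  have := CStarAlgebra.spectralOrderedRing A
  exact exists_eq_star_mul_self_of_map_nonneg (φ := matRep ν ρ) (matRep_injective hρ) hM

lemma matPos_iff_matOp_nonneg {M : Matrix ν ν (K →L[ℂ] K)} : MatPos M ↔ 0 ≤ matOp M := by
  have map_id : M.map (NonUnitalStarAlgHom.id ℂ (K →L[ℂ] K)) = M := rfl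
  constructor
  · intro hM
    rw [← map_id]
    exact hM.matOp_map_nonneg _
  · intro hM
    rw [← map_id] at hM
    exact matPos_of_matOp_map_nonneg Function.injective_id hM

end Positivity

section CompletelyBounded

variable {H K : Type*} [NormedAddCommGroup H] [InnerProductSpace ℂ H]
  [NormedAddCommGroup K] [InnerProductSpace ℂ K]
variable {A' B' : Type*} [AddCommMonoid A'] [Module ℂ A'] [AddCommMonoid B'] [Module ℂ B']
variable {ιA : A' → (H →L[ℂ] H)} {ιB : B' → (K →L[ℂ] K)} {Φ : A' →ₗ[ℂ] B'}

lemma CBBound.norm_matOp_map_le {C : ℝ} (hΦ : CBBound ιA ιB Φ C) {ν : Type*} [Fintype ν]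
    (M : Matrix ν ν A') : ‖matOp ((M.map Φ).map ιB)‖ ≤ C * ‖matOp (M.map ιA)‖ := by
  let e := (Fintype.equivFin ν).symm
  rw [← norm_matOp_submatrix e, ← norm_matOp_submatrix e (M.map ιA)]
  exact hΦ _ (M.submatrix e e)

lemma cbNorm_nonneg : 0 ≤ cbNorm ιA ιB Φ :=
  Real.sInf_nonneg fun _ hC => hC.1

lemma IsCB.cbBound_cbNorm (hΦ : IsCB ιA ιB Φ) : CBBound ιA ιB Φ (cbNorm ιA ιB Φ) := by
  have isClosed_bounds : IsClosed {C : ℝ | 0 ≤ C ∧ CBBound ιA ιB Φ C} := by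
    simp only [CBBound, Set.ofPred_and, Set.ofPred_forall]
    exact isClosed_Ici.inter <| isClosed_iInter fun n => isClosed_iInter fun M =>
      isClosed_le continuous_const (by fun_prop)
  exact (isClosed_bounds.csInf_mem hΦ ⟨0, fun _ hC => hC.1⟩).2

end CompletelyBounded

section ColumnAmplification

variable {K L : Type*} [NormedAddCommGroup K] [InnerProductSpace ℂ K]
  [NormedAddCommGroup L] [InnerProductSpace ℂ L]
variable {ν κ : Type*} [Fintype ν]

/-- The amplification `1_ν ⊗ v : K^ν → L^(ν × κ)` of the column operator `v : K → L^κ` with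
entries `v p`. -/
def ampCol (ν : Type*) [Fintype ν] (v : κ → K →L[ℂ] L) :
    (PiLp 2 fun _ : ν => K) →L[ℂ] PiLp 2 fun _ : ν × κ => L :=
  ((PiLp.continuousLinearEquiv 2 ℂ fun _ : ν × κ => L).symm :
      (ν × κ → L) →L[ℂ] PiLp 2 fun _ : ν × κ => L) ∘L
    ContinuousLinearMap.pi fun u => v u.2 ∘L PiLp.proj 2 (fun _ : ν => K) u.1

lemma ampCol_apply (v : κ → K →L[ℂ] L) (ξ : PiLp 2 fun _ : ν => K) (u : ν × κ) :
    ampCol ν v ξ u = v u.2 (ξ u.1) := rfl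

variable [Fintype κ]

lemma norm_ampCol_le {v : κ → K →L[ℂ] L} {C : ℝ} (hC : 0 ≤ C)
    (hv : ∀ k, ∑ p, ‖v p k‖ ^ 2 ≤ (C * ‖k‖) ^ 2) : ‖ampCol ν v‖ ≤ C := by
  refine ContinuousLinearMap.opNorm_le_bound _ hC fun ξ => ?_
  refine le_of_sq_le_sq ?_ (by positivity)
  calc ‖ampCol ν v ξ‖ ^ 2 = ∑ i, ∑ p, ‖v p (ξ i)‖ ^ 2 := by
        simp only [PiLp.norm_sq_eq_of_L2, Fintype.sum_prod_type, ampCol_apply]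
    _ ≤ ∑ i, (C * ‖ξ i‖) ^ 2 := Finset.sum_le_sum fun i _ => hv (ξ i)
    _ = (C * ‖ξ‖) ^ 2 := by
        simp only [mul_pow, PiLp.norm_sq_eq_of_L2, Finset.mul_sum]

variable [CompleteSpace K] [CompleteSpace L]

lemma adjoint_ampCol_apply (v : κ → K →L[ℂ] L) (ξ : PiLp 2 fun _ : ν × κ => L) (i : ν) :
    ((ampCol ν v)†) ξ i = ∑ p, ((v p)†) (ξ (i, p)) := by
  let T : PiLp 2 fun _ : ν => K := WithLp.toLp 2 fun i => ∑ p, ((v p)†) (ξ (i, p))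
  suffices ((ampCol ν v)†) ξ = T from congr($this i)
  refine ext_inner_right ℂ fun η => ?_
  rw [ContinuousLinearMap.adjoint_inner_left]
  simp only [T, PiLp.inner_apply, Fintype.sum_prod_type, ampCol_apply, sum_inner,
    ContinuousLinearMap.adjoint_inner_left]

lemma matOp_sum_adjoint_comp_comp (v : κ → K →L[ℂ] L) (N : Matrix (ν × κ) (ν × κ) (L →L[ℂ] L)) :
    matOp (of fun i j => ∑ p, ∑ q, (v p)† ∘L N (i, p) (j, q) ∘L v q) =
      (ampCol ν v)† ∘L matOp N ∘L ampCol ν v := by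
  ext ξ i
  simp only [matOp_apply, of_apply, ContinuousLinearMap.comp_apply, adjoint_ampCol_apply,
    ampCol_apply, Fintype.sum_prod_type, map_sum, _root_.sum_apply]
  exact Finset.sum_comm

lemma matOp_comp_comp_adjoint (v : κ → K →L[ℂ] L) (M : Matrix ν ν (K →L[ℂ] K)) :
    matOp (of fun u w : ν × κ => v u.2 ∘L M u.1 w.1 ∘L (v w.2)†) =
      ampCol ν v ∘L matOp M ∘L (ampCol ν v)† := by
  ext ξ u
  simp only [matOp_apply, of_apply, ContinuousLinearMap.comp_apply, adjoint_ampCol_apply,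
    ampCol_apply, Fintype.sum_prod_type, map_sum]

end ColumnAmplification

section SquareSummable

variable {H X : Type*} [NormedAddCommGroup H] [InnerProductSpace ℂ H]

lemma lpEval_apply (x : X) (f : ℓ²(X, H)) : lpEval x f = f x := rfl

lemma lpSingle_eq_single [decEq : DecidableEq X] (x : X) (v : H) :
    (lpSingle x v : ℓ²(X, H)) = lp.single 2 x v := by
  obtain rfl : decEq = fun a b => Classical.propDecidable (a = b) := Subsingleton.elim _ _
  rfl

lemma lpSingle_apply [DecidableEq X] (x y : X) (v : H) :
    (lpSingle x v : ℓ²(X, H)) y = if y = x then v else 0 := by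
  rw [lpSingle_eq_single]
  split_ifs with h
  · subst h
    exact lp.single_apply_self (E := fun _ : X => H) 2 y v
  · exact lp.single_apply_ne (E := fun _ : X => H) 2 x v h

lemma sum_norm_lpEval_sq_le (s : Finset X) (f : ℓ²(X, H)) :
    ∑ x : s, ‖lpEval (x : X) f‖ ^ 2 ≤ ‖f‖ ^ 2 := by
  rw [Finset.sum_coe_sort s fun x => ‖lpEval x f‖ ^ 2]
  simpa [lpEval_apply] using lp.sum_rpow_le_norm_rpow (by norm_num) f s

/-- The matrix entry `x_{p,q} ∈ B(H)` of an operator `x` on `ℓ²(X, H) = ⨁_X H`. -/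
def matEntry (p q : X) : (ℓ²(X, H) →L[ℂ] ℓ²(X, H)) →L[ℂ] (H →L[ℂ] H) :=
  (ContinuousLinearMap.compL ℂ H ℓ²(X, H) H (lpEval p)) ∘L
    (ContinuousLinearMap.compL ℂ H ℓ²(X, H) ℓ²(X, H)).flip (lpSingle q)

variable [CompleteSpace H]

lemma adjoint_lpEval (x : X) : (lpEval x : ℓ²(X, H) →L[ℂ] H)† = lpSingle x := by
  classical
  symm
  rw [ContinuousLinearMap.eq_adjoint_iff]
  intro v f
  rw [lpSingle_eq_single]
  exact lp.inner_single_left (𝕜 := ℂ) (G := fun _ : X => H) x v f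

end SquareSummable

section CrossedProduct

variable {H : Type*} [NormedAddCommGroup H] [InnerProductSpace ℂ H]
variable {G : Type*} [Group G]

lemma lam_apply (t s : G) (f : ℓ²(G, H)) : lam t f s = f (t⁻¹ * s) := rfl

lemma lam_mul_lam (s t : G) : (lam s * lam t : ℓ²(G, H) →L[ℂ] ℓ²(G, H)) = lam (s * t) := by
  ext f r
  simp only [mul_apply_eq_comp, lam_apply, _root_.mul_inv_rev, mul_assoc]

lemma norm_lam_apply_le (t : G) (f : ℓ²(G, H)) : ‖lam t f‖ ≤ ‖f‖ := by
  refine lp.norm_le_of_tsum_le (by norm_num) (norm_nonneg f) ?_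
  rw [lp.norm_rpow_eq_tsum (by norm_num) f]
  exact ((Equiv.mulLeft t⁻¹).tsum_eq fun s => ‖f s‖ ^ (2 : ℝ≥0∞).toReal).le

lemma sum_norm_lam_sq_le (s : Finset G) (f : ℓ²(G, H)) :
    ∑ q : s, ‖lam (q : G)⁻¹ f‖ ^ 2 ≤ (√s.card * ‖f‖) ^ 2 := by
  calc ∑ q : s, ‖lam (q : G)⁻¹ f‖ ^ 2 ≤ ∑ q : s, ‖f‖ ^ 2 := by
        gcongr
        exact norm_lam_apply_le _ f
    _ = (√s.card * ‖f‖) ^ 2 := by simp [mul_pow]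

variable [CompleteSpace H]

lemma adjoint_lam (t : G) : (lam t : ℓ²(G, H) →L[ℂ] ℓ²(G, H))† = lam t⁻¹ := by
  symm
  rw [ContinuousLinearMap.eq_adjoint_iff]
  intro f g
  rw [lp.inner_eq_tsum, lp.inner_eq_tsum, ← (Equiv.mulLeft t⁻¹).tsum_eq]
  simp [lam_apply]

variable {A : Type*} [NonUnitalCStarAlgebra A]
variable (ι : A →⋆ₙₐ[ℂ] (H →L[ℂ] H)) (α : G → A ≃⋆ₐ[ℂ] A)

lemma piRep_apply (a : A) (f : ℓ²(G, H)) (s : G) : piRep ι α a f s = ι (α s⁻¹ a) (f s) := rfl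

/-- The representation `piRep` of `A` on `ℓ²(G, H)`, bundled as a `*`-homomorphism. -/
def piHom : A →⋆ₙₐ[ℂ] (ℓ²(G, H) →L[ℂ] ℓ²(G, H)) where
  toFun := piRep ι α
  map_smul' := (piRepLin ι α).map_smul
  map_zero' := (piRepLin ι α).map_zero
  map_add' := (piRepLin ι α).map_add
  map_mul' a b := by
    ext f s
    simp only [mul_apply_eq_comp, piRep_apply, map_mul]
  map_star' a := by
    rw [ContinuousLinearMap.star_eq_adjoint, ContinuousLinearMap.eq_adjoint_iff]
    intro f g
    simp only [lp.inner_eq_tsum, piRep_apply, map_star, ContinuousLinearMap.star_eq_adjoint,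
      ContinuousLinearMap.adjoint_inner_left]

lemma piHom_apply (a : A) : piHom ι α a = piRep ι α a := rfl

variable {α} in
lemma lam_mul_piHom (hα : IsAction α) (p : G) (a : A) :
    lam p * piHom ι α a = piHom ι α (α p a) * lam p := by
  ext f s
  simp only [mul_apply_eq_comp, piHom_apply, piRep_apply, lam_apply, ← hα.2,
    _root_.mul_inv_rev, inv_inv]

lemma matEntry_piRep_mul_lam [DecidableEq G] (p q s : G) (a : A) :
    matEntry p q (piRep ι α a * lam s) = ι (if s⁻¹ * p = q then α p⁻¹ a else 0) := by
  ext v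
  change ι (α p⁻¹ a) ((lpSingle q v : ℓ²(G, H)) (s⁻¹ * p)) = _
  rw [lpSingle_apply]
  split_ifs <;> simp

variable {ι α} in
lemma matEntry_mem_range (hι : Function.Injective ι) {x : ℓ²(G, H) →L[ℂ] ℓ²(G, H)}
    (hx : x ∈ CrossedSet ι α) (p q : G) : matEntry p q x ∈ Set.range ι := by
  classical
  have isClosed_range : IsClosed (Set.range ι) :=
    (NonUnitalStarAlgHom.isometry ι hι).isClosedEmbedding.isClosed_range
  have span_le : Submodule.span ℂ {x | ∃ (a : A) (t : G), x = piRep ι α a * lam t} ≤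
      (LinearMap.range (iotaLin ι)).comap (matEntry (H := H) p q).toLinearMap := by
    rw [Submodule.span_le]
    rintro _ ⟨a, t, rfl⟩
    exact ⟨_, (matEntry_piRep_mul_lam ι α p q t a).symm⟩
  exact closure_minimal span_le (isClosed_range.preimage (matEntry p q).continuous) hx

end CrossedProduct

section LeftInverse

variable {A B : Type*} [NonUnitalCStarAlgebra A] [NonUnitalCStarAlgebra B] {ι : A →⋆ₙₐ[ℂ] B}

lemma leftInverse_iotaLin_apply (hι : Function.Injective ι) (a : A) :
    (iotaLin ι).leftInverse (ι a) = a :=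
  LinearMap.leftInverse_apply_of_inj (LinearMap.ker_eq_bot.2 hι) a

lemma apply_leftInverse_iotaLin (hι : Function.Injective ι) {b : B} (hb : b ∈ Set.range ι) :
    ι ((iotaLin ι).leftInverse b) = b := by
  obtain ⟨a, rfl⟩ := hb
  rw [leftInverse_iotaLin_apply hι]

end LeftInverse

section MultiplierMap

variable {H : Type*} [NormedAddCommGroup H] [InnerProductSpace ℂ H] [CompleteSpace H]
variable {A : Type*} [NonUnitalCStarAlgebra A] {G : Type*} [Group G]

variable (ι : A →⋆ₙₐ[ℂ] (H →L[ℂ] H)) (α : G → A ≃⋆ₐ[ℂ] A) (Fs : Finset G) (Φ : A →ₗ[ℂ] A)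

/-- The map `x ↦ ∑_{p, q ∈ F} λ_p π(Φ(x_{p,q})) λ_q*` implementing the multiplier `h_F`. The entries
`x_{p,q}` of elements of the crossed product lie in `ι(A)` and are pulled back to `A` by an
arbitrary linear left inverse of `ι`, so that the map is defined on all operators. -/
def multiplierMap : (ℓ²(G, H) →L[ℂ] ℓ²(G, H)) →ₗ[ℂ] (ℓ²(G, H) →L[ℂ] ℓ²(G, H)) where
  toFun x := ∑ p : Fs, ∑ q : Fs,
    lam (p : G) * piHom ι α (Φ ((iotaLin ι).leftInverse (matEntry (p : G) q x))) * lam (q : G)⁻¹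
  map_add' x y := by
    simp only [map_add, mul_add, add_mul, Finset.sum_add_distrib]
  map_smul' c x := by
    simp only [map_smul, mul_smul_comm, smul_mul_assoc, Finset.smul_sum, RingHom.id_apply]

lemma multiplierMap_apply (x : ℓ²(G, H) →L[ℂ] ℓ²(G, H)) :
    multiplierMap ι α Fs Φ x = ∑ p : Fs, ∑ q : Fs,
      lam (p : G) * piHom ι α (Φ ((iotaLin ι).leftInverse (matEntry (p : G) q x))) *
        lam (q : G)⁻¹ := rfl

variable {α} in
lemma multiplierMap_mem_crossedSet (hα : IsAction α) (x : ℓ²(G, H) →L[ℂ] ℓ²(G, H)) :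
    multiplierMap ι α Fs Φ x ∈ CrossedSet ι α := by
  refine subset_closure (Submodule.sum_mem _ fun p _ => Submodule.sum_mem _ fun q _ => ?_)
  rw [lam_mul_piHom ι hα, mul_assoc, lam_mul_lam]
  exact Submodule.subset_span ⟨_, _, rfl⟩

lemma inter_image_mul_left_eq_filter [DecidableEq G] (s : G) :
    Fs ∩ Fs.image (fun q => s * q) = {p ∈ Fs | s⁻¹ * p ∈ Fs} := by
  ext p
  simp only [Finset.mem_inter, Finset.mem_image, Finset.mem_filter, ← eq_inv_mul_iff_mul_eq,
    exists_eq_right]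

variable {ι α} in
lemma multiplierMap_hsGenProp [DecidableEq G] (hι : Function.Injective ι) (hα : IsAction α) :
    HSGenProp ι α (fun s : G => ∑ p ∈ Fs ∩ Fs.image (fun q => s * q),
      autLin (α p) ∘ₗ Φ ∘ₗ autLin (α p⁻¹)) (multiplierMap ι α Fs Φ) := by
  intro a s
  let T (p : G) := piHom ι α (α p (Φ (α p⁻¹ a))) * lam s
  have summand_eq (p q : G) :
      lam p * piHom ι α (Φ ((iotaLin ι).leftInverse (matEntry p q (piRep ι α a * lam s)))) *
        lam q⁻¹ = if s⁻¹ * p = q then T p else 0 := by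
    rw [matEntry_piRep_mul_lam, leftInverse_iotaLin_apply hι, lam_mul_piHom ι hα, mul_assoc,
      lam_mul_lam]
    split_ifs with h
    · simp [T, ← h]
    · simp
  calc multiplierMap ι α Fs Φ (piRep ι α a * lam s)
      = ∑ p : Fs, ∑ q : Fs, if s⁻¹ * (p : G) = q then T p else 0 := by
        simp only [multiplierMap_apply, summand_eq]
    _ = ∑ p ∈ Fs, ∑ q ∈ Fs, if s⁻¹ * p = q then T p else 0 := by
        rw [← Finset.sum_coe_sort Fs]
        exact Finset.sum_congr rfl fun p _ =>
          Finset.sum_coe_sort Fs fun q => if s⁻¹ * (p : G) = q then T p else 0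
    _ = ∑ p ∈ Fs with s⁻¹ * p ∈ Fs, T p := by
        simp only [Finset.sum_ite_eq, Finset.sum_filter]
    _ = _ := by
        rw [← inter_image_mul_left_eq_filter, ← piHom_apply, LinearMap.sum_apply, map_sum,
          Finset.sum_mul]
        rfl

variable {ν : Type*}

/-- The compression to the `F × F` block of a matrix of operators on `ℓ²(G, H)`, with entries pulled
back from `ι(A)` to `A`. -/
def blockMatrix (M : Matrix ν ν (ℓ²(G, H) →L[ℂ] ℓ²(G, H))) : Matrix (ν × Fs) (ν × Fs) A :=
  of fun u w => (iotaLin ι).leftInverse (matEntry (u.2 : G) w.2 (M u.1 w.1))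

variable [Fintype ν]

lemma matOp_map_multiplierMap (M : Matrix ν ν (ℓ²(G, H) →L[ℂ] ℓ²(G, H))) :
    matOp (M.map (multiplierMap ι α Fs Φ)) =
      (ampCol ν fun q : Fs => lam (q : G)⁻¹)† ∘L
        matOp (((blockMatrix ι Fs M).map Φ).map (piHom ι α)) ∘L
          ampCol ν fun q : Fs => lam (q : G)⁻¹ := by
  rw [← matOp_sum_adjoint_comp_comp]
  congr! 1
  ext1 i j
  simp only [map_apply, of_apply, multiplierMap_apply, adjoint_lam, inv_inv, blockMatrix]
  rfl

variable {ι α}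

lemma matOp_map_blockMatrix (hι : Function.Injective ι)
    {M : Matrix ν ν (ℓ²(G, H) →L[ℂ] ℓ²(G, H))} (hM : ∀ i j, M i j ∈ CrossedSet ι α) :
    matOp ((blockMatrix ι Fs M).map ι) =
      ampCol ν (fun p : Fs => lpEval (p : G)) ∘L matOp M ∘L
        (ampCol ν fun p : Fs => lpEval (p : G))† := by
  rw [← matOp_comp_comp_adjoint]
  congr! 1
  ext1 u w
  simp only [map_apply, of_apply, blockMatrix, adjoint_lpEval]
  exact apply_leftInverse_iotaLin hι (matEntry_mem_range hι (hM _ _) _ _)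

lemma norm_matOp_map_blockMatrix_le (hι : Function.Injective ι)
    {M : Matrix ν ν (ℓ²(G, H) →L[ℂ] ℓ²(G, H))} (hM : ∀ i j, M i j ∈ CrossedSet ι α) :
    ‖matOp ((blockMatrix ι Fs M).map ι)‖ ≤ ‖matOp M‖ := by
  let W := ampCol ν fun p : Fs => (lpEval (p : G) : ℓ²(G, H) →L[ℂ] H)
  have norm_W_le : ‖W‖ ≤ 1 :=
    norm_ampCol_le zero_le_one fun f => by simpa using sum_norm_lpEval_sq_le Fs f
  have norm_adjoint_W_le : ‖W†‖ ≤ 1 := by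
    rwa [LinearIsometryEquiv.norm_map]
  calc ‖matOp ((blockMatrix ι Fs M).map ι)‖ = ‖W ∘L matOp M ∘L W†‖ := by
        rw [matOp_map_blockMatrix Fs hι hM]
    _ ≤ ‖W‖ * (‖matOp M‖ * ‖W†‖) :=
        (ContinuousLinearMap.opNorm_comp_le _ _).trans <| by
          gcongr
          exact ContinuousLinearMap.opNorm_comp_le _ _
    _ ≤ 1 * (‖matOp M‖ * 1) := by gcongr
    _ = ‖matOp M‖ := by ring

lemma norm_matOp_map_multiplierMap_le (M : Matrix ν ν (ℓ²(G, H) →L[ℂ] ℓ²(G, H))) :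
    ‖matOp (M.map (multiplierMap ι α Fs Φ))‖ ≤
      Fs.card * ‖matOp (((blockMatrix ι Fs M).map Φ).map (piHom ι α))‖ := by
  let V := ampCol ν fun q : Fs => (lam (q : G)⁻¹ : ℓ²(G, H) →L[ℂ] ℓ²(G, H))
  let N := matOp (((blockMatrix ι Fs M).map Φ).map (piHom ι α))
  have norm_V_le : ‖V‖ ≤ √Fs.card := norm_ampCol_le (by positivity) (sum_norm_lam_sq_le Fs)
  have norm_adjoint_V_le : ‖V†‖ ≤ √Fs.card := by
    rwa [LinearIsometryEquiv.norm_map]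
  calc ‖matOp (M.map (multiplierMap ι α Fs Φ))‖ = ‖V† ∘L N ∘L V‖ := by
        rw [matOp_map_multiplierMap]
    _ ≤ ‖V†‖ * (‖N‖ * ‖V‖) :=
        (ContinuousLinearMap.opNorm_comp_le _ _).trans <| by
          gcongr
          exact ContinuousLinearMap.opNorm_comp_le _ _
    _ ≤ √Fs.card * (‖N‖ * √Fs.card) := by gcongr
    _ = Fs.card * ‖N‖ := by rw [mul_left_comm, Real.mul_self_sqrt (by positivity), mul_comm]

variable {Φ}

lemma multiplierMap_cbBoundOnCrossed (hι : Function.Injective ι) {C : ℝ} (hC : 0 ≤ C)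
    (hΦ : CBBound (fun a => ι a) (fun a => ι a) Φ C) :
    CBBoundOnCrossed ι α (multiplierMap ι α Fs Φ) (Fs.card * C) := by
  intro n M hM
  let B := blockMatrix ι Fs M
  calc ‖matOp (M.map (multiplierMap ι α Fs Φ))‖
      ≤ Fs.card * ‖matOp ((B.map Φ).map (piHom ι α))‖ := norm_matOp_map_multiplierMap_le Fs Φ M
    _ ≤ Fs.card * ‖matOp ((B.map Φ).map ι)‖ := by
        gcongr
        exact norm_matOp_map_le_of_injective hι _ _
    _ ≤ Fs.card * (C * ‖matOp (B.map ι)‖) := by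
        gcongr
        exact hΦ.norm_matOp_map_le B
    _ ≤ Fs.card * (C * ‖matOp M‖) := by
        gcongr
        exact norm_matOp_map_blockMatrix_le Fs hι hM
    _ = Fs.card * C * ‖matOp M‖ := by ring

lemma matPos_blockMatrix (hι : Function.Injective ι)
    {M : Matrix ν ν (ℓ²(G, H) →L[ℂ] ℓ²(G, H))} (hM : ∀ i j, M i j ∈ CrossedSet ι α)
    (hpos : MatPos M) : MatPos (blockMatrix ι Fs M) := by
  refine matPos_of_matOp_map_nonneg hι ?_
  rw [matPos_iff_matOp_nonneg, ContinuousLinearMap.nonneg_iff_isPositive] at hpos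
  rw [matOp_map_blockMatrix Fs hι hM, ContinuousLinearMap.nonneg_iff_isPositive]
  exact hpos.conj_adjoint _

lemma multiplierMap_cpOnCrossed (hι : Function.Injective ι) (hα : IsAction α)
    (hΦ : IsCompletelyPositive Φ) : CPOnCrossed ι α (multiplierMap ι α Fs Φ) := by
  refine ⟨fun x _ => multiplierMap_mem_crossedSet ι Fs Φ hα x, fun n M hM hpos => ?_⟩
  have dilation_nonneg : 0 ≤ matOp (((blockMatrix ι Fs M).map Φ).map (piHom ι α)) :=
    (hΦ.matPos_map (matPos_blockMatrix Fs hι hM hpos)).matOp_map_nonneg _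
  rw [ContinuousLinearMap.nonneg_iff_isPositive] at dilation_nonneg
  rw [matPos_iff_matOp_nonneg, matOp_map_multiplierMap, ContinuousLinearMap.nonneg_iff_isPositive]
  exact dilation_nonneg.adjoint_conj _

end MultiplierMap

theorem hF_is_herzSchur_multiplier_general
    {H : Type*} [NormedAddCommGroup H] [InnerProductSpace ℂ H] [CompleteSpace H]
    {A : Type*} [NonUnitalCStarAlgebra A] {G : Type*} [Group G] [DecidableEq G]
    (ι : A →⋆ₙₐ[ℂ] (H →L[ℂ] H)) (hι : Function.Injective ι)
    (α : G → A ≃⋆ₐ[ℂ] A) (hα : IsAction α)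
    (Fs : Finset G) (Φ : A →ₗ[ℂ] A)
    (hΦcb : ∃ C : ℝ, 0 ≤ C ∧ CBBound (fun a => ι a) (fun a => ι a) Φ C) :
    (∃ Ψ, HSGenProp ι α
        (fun s : G => ∑ p ∈ Fs ∩ Fs.image (fun q => s * q),
          autLin (α p) ∘ₗ Φ ∘ₗ autLin (α p⁻¹)) Ψ ∧
      (∀ x ∈ CrossedSet ι α, Ψ x ∈ CrossedSet ι α) ∧
      CBBoundOnCrossed ι α Ψ
        ((Fs.card : ℝ) * cbNorm (fun a => ι a) (fun a => ι a) Φ)) ∧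
    (IsCompletelyPositive Φ →
      IsHerzSchurMultiplierCP ι α
        (fun s : G => ∑ p ∈ Fs ∩ Fs.image (fun q => s * q),
          autLin (α p) ∘ₗ Φ ∘ₗ autLin (α p⁻¹))) := by
  have generator := multiplierMap_hsGenProp Fs Φ hι hα
  have cb_bound := multiplierMap_cbBoundOnCrossed (α := α) Fs hι cbNorm_nonneg
    (IsCB.cbBound_cbNorm hΦcb)
  refine ⟨⟨multiplierMap ι α Fs Φ, generator,
    fun x _ => multiplierMap_mem_crossedSet ι Fs Φ hα x, cb_bound⟩, fun hΦ => ?_⟩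
  exact ⟨multiplierMap ι α Fs Φ, generator, multiplierMap_cpOnCrossed Fs hι hα hΦ,
    _, mul_nonneg (Nat.cast_nonneg _) cbNorm_nonneg, cb_bound⟩

/-- **Proposition 2.10.** Let `F ⊆ G` be finite and `Φ ∈ CB(A)`.  The map
`h_F(s)(a) = Σ_{p ∈ F ∩ sF} (α_p ∘ Φ ∘ α_p⁻¹)(a)` is a Herz-Schur `(A,G,α)`-multiplier
with `‖S_{h_F}‖_cb ≤ |F| ⬝ ‖Φ‖_cb`; moreover, if `Φ` is completely positive then `h_F`
is a completely positive Herz-Schur `(A,G,α)`-multiplier. -/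
theorem hF_is_herzSchur_multiplier
    {H : Type*} [NormedAddCommGroup H] [InnerProductSpace ℂ H] [CompleteSpace H]
    {A : Type*} [NonUnitalCStarAlgebra A] {G : Type*} [Group G] [DecidableEq G]
    (ι : A →⋆ₙₐ[ℂ] (H →L[ℂ] H)) (hisom : ∀ a : A, ‖ι a‖ = ‖a‖)
    (hnd : NondegenerateRep ι)
    (α : G → A ≃⋆ₐ[ℂ] A) (hα : IsAction α)
    (Fs : Finset G) (Φ : A →ₗ[ℂ] A)
    (hΦcb : ∃ C : ℝ, 0 ≤ C ∧ CBBound (fun a => ι a) (fun a => ι a) Φ C) :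
    (∃ Ψ, HSGenProp ι α
        (fun s : G => ∑ p ∈ Fs ∩ Fs.image (fun q => s * q),
          autLin (α p) ∘ₗ Φ ∘ₗ autLin (α p⁻¹)) Ψ ∧
      (∀ x ∈ CrossedSet ι α, Ψ x ∈ CrossedSet ι α) ∧
      CBBoundOnCrossed ι α Ψ
        ((Fs.card : ℝ) * cbNorm (fun a => ι a) (fun a => ι a) Φ)) ∧
    (IsCompletelyPositive Φ →
      IsHerzSchurMultiplierCP ι α
        (fun s : G => ∑ p ∈ Fs ∩ Fs.image (fun q => s * q),
          autLin (α p) ∘ₗ Φ ∘ₗ autLin (α p⁻¹))) :=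
  hF_is_herzSchur_multiplier_general ι (AddMonoidHomClass.isometry_of_norm ι hisom).injective
    α hα Fs Φ hΦcb

end
end
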